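/- Every finite set of points in the Euclidean plane in general position, each colored red or blue, that contains at least one red point and at least one blue point, admits a plane bichromatic spanning tree (a spanning tree with straight-line edges in which every edge has one red and one blue endpoint and no two edges cross). -/

import Mathlib

open scoped Classical

noncomputable section

/-- Points in the Euclidean plane. -/
abbrev Pt : Type := EuclideanSpace ℝ (Fin 2)

/-- `S` is in general position: no three (distinct) points of `S` are collinear. -/
def GenPos (S : Finset Pt) : Prop :=
  ∀ p ∈ S, ∀ q ∈ S, ∀ r ∈ S, p ≠ q → p ≠ r → q ≠ r →
    ¬ Collinear ℝ ({p, q, r} : Set Pt)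

/-- The closed segments `[a,b]` and `[c,d]` cross: they share a point that is
interior to both segments. -/
def SegCross (a b c d : Pt) : Prop :=
  ∃ p : Pt, p ∈ openSegment ℝ a b ∧ p ∈ openSegment ℝ c d

/-- Two unordered edges (over vertices lying in the plane) cross. -/
def EdgeCross {S : Finset Pt} (e₁ e₂ : Sym2 ↥S) : Prop :=
  ∃ a b c d : ↥S, e₁ = s(a, b) ∧ e₂ = s(c, d) ∧ SegCross ↑a ↑b ↑c ↑d

/-- A (straight-line drawn) graph is plane if no two of its edges cross. -/
def PlaneGraph {S : Finset Pt} (G : SimpleGraph ↥S) : Prop :=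
  ∀ e₁ ∈ G.edgeSet, ∀ e₂ ∈ G.edgeSet, e₁ ≠ e₂ → ¬ EdgeCross e₁ e₂

/-- Every edge has one red (`true`) and one blue (`false`) endpoint. -/
def Bichromatic {S : Finset Pt} (col : Pt → Bool) (G : SimpleGraph ↥S) : Prop :=
  ∀ u v : ↥S, G.Adj u v → col ↑u ≠ col ↑v

/-- The Euclidean length of an unordered edge. -/
def edgeLen {S : Finset Pt} : Sym2 ↥S → ℝ :=
  Sym2.lift ⟨fun a b => dist (a : Pt) (b : Pt), fun _ _ => dist_comm _ _⟩

/-- The total Euclidean length of the edges of a graph drawn with straight-line edges. -/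
def graphLen {S : Finset Pt} (G : SimpleGraph ↥S) : ℝ :=
  ∑ᶠ e ∈ G.edgeSet, edgeLen e

/-- A bichromatic spanning tree of `S`. -/
def IsBST {S : Finset Pt} (col : Pt → Bool) (G : SimpleGraph ↥S) : Prop :=
  G.IsTree ∧ Bichromatic col G

/-- A minimum bichromatic spanning tree of `S`. -/
def IsMinBST {S : Finset Pt} (col : Pt → Bool) (G : SimpleGraph ↥S) : Prop :=
  IsBST col G ∧ ∀ G' : SimpleGraph ↥S, IsBST col G' → graphLen G ≤ graphLen G'

/-- Two points seen from `p` in the direction of a third point `x ≠ p` are collinear with `p`. -/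
theorem collinear_of_wbtw_of_wbtw {p x b c : Pt} (hx : x ≠ p) (hb : Wbtw ℝ p x b)
    (hc : Wbtw ℝ p x c) : Collinear ℝ ({p, b, c} : Set Pt) := by
  have key : ∀ {y : Pt}, Wbtw ℝ p x y → y ∈ line[ℝ, p, x] := fun h =>
    h.collinear.mem_affineSpan_of_mem_of_ne (by simp) (by simp) (by simp) hx.symm
  exact collinear_triple_of_mem_affineSpan_pair (left_mem_affineSpan_pair ℝ p x)
    (key hb) (key hc)

theorem segCross_swap_left {a b c d : Pt} (h : SegCross a b c d) : SegCross b a c d := by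
  obtain ⟨x, h₁, h₂⟩ := h
  exact ⟨x, openSegment_symm ℝ a b ▸ h₁, h₂⟩

theorem segCross_swap_right {a b c d : Pt} (h : SegCross a b c d) : SegCross a b d c := by
  obtain ⟨x, h₁, h₂⟩ := h
  exact ⟨x, h₁, openSegment_symm ℝ c d ▸ h₂⟩

theorem ne_left_of_mem_openSegment {a b x : Pt} (hab : a ≠ b) (hx : x ∈ openSegment ℝ a b) :
    x ≠ a := by
  rintro rfl
  exact hab (left_mem_openSegment_iff.1 hx)

/-- Exchanging the endpoints of two crossing segments strictly decreases the total length. -/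
theorem dist_add_dist_lt_of_segCross {p b q c : Pt} (hpb : p ≠ b)
    (hcol : ¬ Collinear ℝ ({p, b, c} : Set Pt)) (h : SegCross p b q c) :
    dist p c + dist q b < dist p b + dist q c := by
  obtain ⟨x, h₁, h₂⟩ := h
  have w₁ : Wbtw ℝ p x b := mem_segment_iff_wbtw.1 (openSegment_subset_segment ℝ _ _ h₁)
  have w₂ : Wbtw ℝ q x c := mem_segment_iff_wbtw.1 (openSegment_subset_segment ℝ _ _ h₂)
  have hlt : dist p c < dist p x + dist x c := by
    refine lt_of_le_of_ne (dist_triangle _ _ _) fun heq => hcol ?_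
    exact collinear_of_wbtw_of_wbtw (ne_left_of_mem_openSegment hpb h₁) w₁
      (dist_add_dist_eq_iff.1 heq.symm)
  have := dist_triangle q x b
  have := w₁.dist_add_dist
  have := w₂.dist_add_dist
  linarith

/-- Segments with a common endpoint do not cross, unless the three endpoints are collinear. -/
theorem not_segCross_of_not_collinear {p b c : Pt} (hpb : p ≠ b)
    (hcol : ¬ Collinear ℝ ({p, b, c} : Set Pt)) : ¬ SegCross p b p c := by
  intro h
  have := dist_add_dist_lt_of_segCross hpb hcol h
  linarith

/-- `b` is a blue point nearest to the red point `p`, where distances from each blue point are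
discounted by its distance to `r`. -/
def IsNearestBlue (S : Finset Pt) (col : Pt → Bool) (r p b : Pt) : Prop :=
  col p = true ∧ col b = false ∧
    ∀ c ∈ S, col c = false → dist p b - dist r b ≤ dist p c - dist r c

theorem IsNearestBlue.ne {S : Finset Pt} {col : Pt → Bool} {r p b : Pt}
    (h : IsNearestBlue S col r p b) : p ≠ b := by
  rintro rfl
  simpa [h.1] using h.2.1

theorem IsNearestBlue.not_segCross {S : Finset Pt} {col : Pt → Bool} (hgp : GenPos S)
    {r p b q c : Pt} (hp : p ∈ S) (hb : b ∈ S) (hq : q ∈ S) (hc : c ∈ S)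
    (h₁ : IsNearestBlue S col r p b) (h₂ : IsNearestBlue S col r q c)
    (hne : ¬ (p = q ∧ b = c)) : ¬ SegCross p b q c := by
  intro h
  have hpc : p ≠ c := by
    rintro rfl
    simpa [h₁.1] using h₂.2.1
  by_cases hbc : b = c
  · subst hbc
    have hpq : p ≠ q := fun e => hne ⟨e, rfl⟩
    exact not_segCross_of_not_collinear h₁.ne.symm
      (hgp b hb p hp q hq h₁.ne.symm h₂.ne.symm hpq)
      (segCross_swap_left (segCross_swap_right h))
  · have := dist_add_dist_lt_of_segCross h₁.ne (hgp p hp b hb c hc h₁.ne hpc hbc) h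
    have := h₁.2.2 c hc h₂.2.1
    have := h₂.2.2 b hb h₁.2.1
    linarith

/-- The graph joining each red point to its nearest blue points, with distances discounted by
the distance to `r`. If `r` is red, it is joined to every blue point. -/
def nearestBlueGraph (S : Finset Pt) (col : Pt → Bool) (r : Pt) : SimpleGraph ↥S where
  Adj u v := IsNearestBlue S col r u v ∨ IsNearestBlue S col r v u
  symm := ⟨fun _ _ h => h.symm⟩
  loopless := ⟨fun _ h => h.elim (fun h => h.ne rfl) (fun h => h.ne rfl)⟩

theorem bichromatic_nearestBlueGraph (S : Finset Pt) (col : Pt → Bool) (r : Pt) :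
    Bichromatic col (nearestBlueGraph S col r) := by
  rintro u v (h | h) <;> simp [h.1, h.2.1]

theorem planeGraph_nearestBlueGraph {S : Finset Pt} (col : Pt → Bool) (hgp : GenPos S) (r : Pt) :
    PlaneGraph (nearestBlueGraph S col r) := by
  rintro _ h₁ _ h₂ hne ⟨a, b, c, d, rfl, rfl, hx⟩
  have key : ∀ {a b c d : ↥S}, IsNearestBlue S col r a b → IsNearestBlue S col r c d →
      s(a, b) ≠ s(c, d) → ¬ SegCross (a : Pt) b c d := fun {a b c d} ha hc hne =>
    ha.not_segCross hgp a.2 b.2 c.2 d.2 hc fun ⟨e₁, e₂⟩ =>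
      hne (by rw [Subtype.ext e₁, Subtype.ext e₂])
  rw [SimpleGraph.mem_edgeSet] at h₁ h₂
  rcases h₁ with h₁ | h₁ <;> rcases h₂ with h₂ | h₂
  · exact key h₁ h₂ hne hx
  · exact key h₁ h₂ (by rwa [Sym2.eq_swap (a := d)]) (segCross_swap_right hx)
  · exact key h₁ h₂ (by rwa [Sym2.eq_swap (a := b)]) (segCross_swap_left hx)
  · exact key h₁ h₂ (by rwa [Sym2.eq_swap (a := b), Sym2.eq_swap (a := d)])
      (segCross_swap_left (segCross_swap_right hx))

theorem connected_nearestBlueGraph {S : Finset Pt} {col : Pt → Bool} {r : Pt} (hr : r ∈ S)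
    (hcr : col r = true) (hblue : ∃ b ∈ S, col b = false) :
    (nearestBlueGraph S col r).Connected := by
  have blue : ∀ b : ↥S, col b = false → (nearestBlueGraph S col r).Reachable ⟨r, hr⟩ b :=
    fun b hb => SimpleGraph.Adj.reachable (Or.inl ⟨hcr, hb, by simp⟩)
  refine SimpleGraph.connected_iff_exists_forall_reachable _ |>.2 ⟨⟨r, hr⟩, fun p => ?_⟩
  cases hp : col p with
  | false => exact blue p hp
  | true =>
    obtain ⟨b₀, hb₀, hcb₀⟩ := hblue
    obtain ⟨b, hb, hmin⟩ := (S.filter (col · = false)).exists_min_image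
      (fun b => dist (p : Pt) b - dist r b) ⟨b₀, by simp [hb₀, hcb₀]⟩
    rw [Finset.mem_filter] at hb
    refine (blue ⟨b, hb.1⟩ hb.2).trans (SimpleGraph.Adj.reachable (Or.inr ⟨hp, hb.2, ?_⟩))
    exact fun c hc hcc => hmin c (Finset.mem_filter.2 ⟨hc, hcc⟩)

/-- Every finite bicolored point set in general position with at
least one red and at least one blue point admits a plane bichromatic spanning tree. -/
theorem exists_plane_bichromatic_spanning_tree
    (S : Finset Pt) (col : Pt → Bool) (hgp : GenPos S)
    (hred : ∃ r ∈ S, col r = true) (hblue : ∃ b ∈ S, col b = false) :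
    ∃ G : SimpleGraph ↥S, G.IsTree ∧ Bichromatic col G ∧ PlaneGraph G := by
  obtain ⟨r, hr, hcr⟩ := hred
  obtain ⟨T, hle, hT⟩ := (connected_nearestBlueGraph hr hcr hblue).exists_isTree_le
  exact ⟨T, hT, fun u v h => bichromatic_nearestBlueGraph S col r u v (hle h),
    fun e₁ h₁ e₂ h₂ => planeGraph_nearestBlueGraph col hgp r e₁
      (SimpleGraph.edgeSet_mono hle h₁) e₂ (SimpleGraph.edgeSet_mono hle h₂)⟩
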